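/- For all integers w, p0, p1, p2 and all nonnegative integers u, ℓ, one has G(w,u,ℓ+1;p0,p1,p2) = q^{u} G(w,u,ℓ;p0,p1,p2) − q^{u−2ℓ} G(w+1,u,ℓ;p0,p1,p2). -/

import Mathlib

open Finset

noncomputable section

/-- The field `ℚ(q)` of rational functions over `ℚ`. -/
abbrev F : Type := RatFunc ℚ

/-- The indeterminate `q`. -/
noncomputable def qq : F := RatFunc.X

/-- The quantum integer `[n]` with base `v`: `(v^n - v^(-n))/(v - v⁻¹)`. -/
noncomputable def qint (v : F) (n : ℤ) : F := (v ^ n - v ^ (-n)) / (v - v⁻¹)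

/-- The quantum factorial `[m]! = [1][2]⋯[m]` with base `v`. -/
noncomputable def qfact (v : F) (m : ℕ) : F := ∏ k ∈ range m, qint v ((k : ℤ) + 1)

/-- The quantum binomial coefficient `C_v(n,d) = [n][n-1]⋯[n-d+1]/[d]!` for `d ≥ 0`,
and `0` for `d < 0`. -/
noncomputable def qbinom (v : F) (n d : ℤ) : F :=
  if d < 0 then 0
  else (∏ k ∈ range d.toNat, qint v (n - (k : ℤ))) / qfact v d.toNat

/-- The function `G(w,u,ℓ;p0,p1,p2)` of [CLW, (5.1)]. -/
noncomputable def G (w : ℤ) (u ℓ : ℕ) (p0 p1 p2 : ℤ) : F :=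
  (-1 : F) ^ w * qq ^ ((u : ℤ) ^ 2 - w * (u : ℤ) + (ℓ : ℤ) * (u : ℤ)) *
  ((∑ c ∈ range (u + 1), ∑ e ∈ range (u + 1 - c), ∑ t ∈ range (ℓ + 1),
      (let r : ℕ := u - c - e;
       if Even ((t : ℤ) + w - (r : ℤ)) then
         qq ^ (-(t : ℤ) * ((ℓ : ℤ) + (u : ℤ) - 1) - (u : ℤ) * ((c : ℤ) + (e : ℤ)) + 2 * (c : ℤ)
               + (r : ℤ) * p0 + 2 * (c : ℤ) * p1 + 2 * (e : ℤ) * p2)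
           * qbinom qq (ℓ : ℤ) (t : ℤ) * qbinom qq (w + (t : ℤ) + p0) (r : ℤ)
           * qbinom (qq ^ 2) ((w + (t : ℤ) - (r : ℤ)) / 2 + p1) (c : ℤ)
           * qbinom (qq ^ 2) ((w + (t : ℤ) - (r : ℤ)) / 2 + p2) (e : ℤ)
       else 0))
  - (∑ c ∈ range (u + 1), ∑ e ∈ range (u + 1 - c), ∑ t ∈ range (ℓ + 1),
      (let r : ℕ := u - c - e;
       if ¬ Even ((t : ℤ) + w - (r : ℤ)) then
         qq ^ (-(t : ℤ) * ((ℓ : ℤ) + (u : ℤ) - 1) - ((u : ℤ) - 1) * ((c : ℤ) + (e : ℤ))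
               + (r : ℤ) * p0 + 2 * (c : ℤ) * p1 + 2 * (e : ℤ) * p2)
           * qbinom qq (ℓ : ℤ) (t : ℤ) * qbinom qq (w + (t : ℤ) + p0) (r : ℤ)
           * qbinom (qq ^ 2) (1 + (w + (t : ℤ) - (r : ℤ) - 1) / 2 + p1) (c : ℤ)
           * qbinom (qq ^ 2) ((w + (t : ℤ) - (r : ℤ) - 1) / 2 + p2) (e : ℤ)
       else 0)))

/-!
For fixed `c`, `e`, `r`, the summand of `G` depends on `t` only through `w + t`, apart from the
factor `q ^ (-t (ℓ + u - 1)) C_q(ℓ, t)`. By the `q`-binomial theorem these factors are the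
coefficients of the operator `∏_{k < ℓ} (1 + q ^ (-u - 2 k) S)`, where `S` is the shift
`w ↦ w + 1`. Going from `ℓ` to `ℓ + 1` multiplies it by `1 + q ^ (-u - 2 ℓ) S`, and the two terms
of this factor are the two terms of the recursion; on coefficients this is the `q`-Pascal rule.
The sign and the remaining powers of `q` come from the prefactor `(-1) ^ w q ^ (u² - w u + ℓ u)`.
-/

section QBinomial

variable {v : F}

theorem qint_base_zero (n : ℤ) : qint 0 n = 0 := by
  simp [qint]

theorem qint_zero : qint v 0 = 0 := by
  simp [qint]

theorem qint_eq_zero_iff (hv : v ≠ 0) {n : ℤ} : qint v n = 0 ↔ v ^ (2 * n) = 1 := by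
  have sub_inv_eq_zero_iff {x : F} (hx : x ≠ 0) : x - x⁻¹ = 0 ↔ x ^ 2 = 1 := by
    rw [sub_eq_zero, ← mul_eq_one_iff_eq_inv₀ hx, sq]
  rw [qint, zpow_neg, div_eq_zero_iff, sub_inv_eq_zero_iff (zpow_ne_zero n hv),
    sub_inv_eq_zero_iff hv, zpow_mul, ← zpow_natCast (v ^ n), ← zpow_mul, mul_comm n, zpow_mul]
  refine or_iff_left_of_imp fun h => ?_
  simp [zpow_ofNat, h]

theorem qint_add (m n : ℤ) : qint v (m + n) = v ^ n * qint v m + v ^ (-m) * qint v n := by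
  obtain rfl | hv := eq_or_ne v 0
  · simp [qint_base_zero]
  · simp only [qint, neg_add, zpow_add₀ hv]
    ring

theorem qfact_succ (d : ℕ) : qfact v (d + 1) = qfact v d * qint v (d + 1) :=
  prod_range_succ _ d

theorem qint_ne_zero_of_qfact_ne_zero {d k : ℕ} (h : qfact v d ≠ 0) (hk : k < d) :
    qint v (k + 1) ≠ 0 :=
  prod_ne_zero_iff.1 h k (mem_range.2 hk)

theorem qbinom_natCast (n : ℤ) (d : ℕ) :
    qbinom v n d = (∏ k ∈ range d, qint v (n - k)) / qfact v d := by
  simp [qbinom]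

theorem qbinom_zero_right (n : ℤ) : qbinom v n 0 = 1 := by
  simp [qbinom, qfact]

theorem qbinom_eq_zero_of_lt {n d : ℕ} (h : n < d) : qbinom v n d = 0 := by
  rw [qbinom_natCast, prod_eq_zero (mem_range.2 h) (by rw [sub_self, qint_zero]), zero_div]

theorem qbinom_succ_right (n : ℤ) (d : ℕ) :
    qbinom v n (d + 1) = qbinom v n d * (qint v (n - d) / qint v (d + 1)) := by
  rw [← Nat.cast_succ, qbinom_natCast, qbinom_natCast, prod_range_succ, qfact_succ,
    mul_div_mul_comm, Nat.cast_succ]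

theorem qbinom_add_one_succ (n : ℤ) (d : ℕ) :
    qbinom v (n + 1) (d + 1) = qbinom v n d * (qint v (n + 1) / qint v (d + 1)) := by
  rw [← Nat.cast_succ, qbinom_natCast, qbinom_natCast, prod_range_succ', qfact_succ]
  simp only [Nat.cast_succ, Nat.cast_zero, sub_zero, add_sub_add_right_eq_sub]
  rw [mul_div_mul_comm]

theorem qbinom_pascal (n : ℤ) {d : ℕ} (hd : qint v (d + 1) ≠ 0) :
    qbinom v (n + 1) (d + 1) =
      v ^ ((d : ℤ) + 1) * qbinom v n (d + 1) + v ^ ((d : ℤ) - n) * qbinom v n d := by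
  have qint_split : qint v (n + 1) =
      v ^ ((d : ℤ) + 1) * qint v (n - d) + v ^ ((d : ℤ) - n) * qint v (d + 1) := by
    rw [← neg_sub n, ← qint_add, ← add_assoc, sub_add_cancel]
  rw [qbinom_add_one_succ, qbinom_succ_right, qint_split]
  field_simp

end QBinomial

section QBinomialSum

/-- The value at `0` of the operator `∏_{k < ℓ} (1 + v ^ (-a - 2 k) S)` applied to `f`, where `S`
is the shift `(S f) t = f (t + 1)`, in the expanded form given by the `q`-binomial theorem
(which requires `[ℓ]! ≠ 0`). -/
def qbinomSum (v : F) (a : ℤ) (ℓ : ℕ) (f : ℕ → F) : F :=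
  ∑ t ∈ range (ℓ + 1), v ^ (-(t : ℤ) * (ℓ + a - 1)) * qbinom v ℓ t * f t

variable {v : F} {ℓ : ℕ}

theorem qbinomSum_coeff_succ {t : ℕ} (ht : qint v (t + 1) ≠ 0) (a : ℤ) :
    v ^ (-((t : ℤ) + 1) * (ℓ + 1 + a - 1)) * qbinom v (ℓ + 1) (t + 1) =
      v ^ (-((t : ℤ) + 1) * (ℓ + a - 1)) * qbinom v ℓ (t + 1) +
        v ^ (-a - 2 * ℓ) * (v ^ (-(t : ℤ) * (ℓ + a - 1)) * qbinom v ℓ t) := by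
  have hv : v ≠ 0 := by
    rintro rfl
    exact ht (qint_base_zero _)
  rw [qbinom_pascal ℓ ht, mul_add, ← mul_assoc, ← mul_assoc, ← mul_assoc, ← zpow_add₀ hv,
    ← zpow_add₀ hv, ← zpow_add₀ hv]
  ring_nf

theorem qbinomSum_eq_sum_range_add_two (a : ℤ) (f : ℕ → F) :
    qbinomSum v a ℓ f =
      ∑ t ∈ range (ℓ + 2), v ^ (-(t : ℤ) * (ℓ + a - 1)) * qbinom v ℓ t * f t := by
  rw [sum_range_succ, qbinom_eq_zero_of_lt ℓ.lt_succ_self, mul_zero, zero_mul, add_zero, qbinomSum]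

theorem qbinomSum_succ (h : qfact v (ℓ + 1) ≠ 0) (a : ℤ) (f : ℕ → F) :
    qbinomSum v a (ℓ + 1) f =
      qbinomSum v a ℓ f + v ^ (-a - 2 * ℓ) * qbinomSum v a ℓ fun t => f (t + 1) := by
  rw [qbinomSum_eq_sum_range_add_two (ℓ := ℓ) a f, qbinomSum, qbinomSum, sum_range_succ' _ (ℓ + 1),
    sum_range_succ' _ (ℓ + 1), mul_sum, add_right_comm, ← sum_add_distrib]
  push_cast
  refine congrArg₂ (· + ·) (sum_congr rfl fun t ht => ?_) ?_
  · rw [qbinomSum_coeff_succ (qint_ne_zero_of_qfact_ne_zero h (mem_range.1 ht))]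
    ring
  · simp [qbinom_zero_right]

end QBinomialSum

theorem not_isOfFinOrder_ratFuncX (K : Type*) [Field K] :
    ¬ IsOfFinOrder (RatFunc.X : RatFunc K) := by
  intro h
  obtain ⟨k, hk, hX⟩ := isOfFinOrder_iff_pow_eq_one.1 h
  exact (RatFunc.transcendental_X (K := K)).pow hk (hX ▸ isAlgebraic_one)

theorem qq_ne_zero : qq ≠ 0 :=
  RatFunc.X_ne_zero

theorem qq_zpow_eq_one_iff {n : ℤ} : qq ^ n = 1 ↔ n = 0 := by
  refine ⟨fun h => ?_, fun h => by rw [h, zpow_zero]⟩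
  by_contra hn
  exact not_isOfFinOrder_ratFuncX ℚ (isOfFinOrder_iff_zpow_eq_one.2 ⟨n, hn, h⟩)

theorem qfact_qq_ne_zero (d : ℕ) : qfact qq d ≠ 0 :=
  prod_ne_zero_iff.2 fun k _ => by
    rw [Ne, qint_eq_zero_iff qq_ne_zero, qq_zpow_eq_one_iff]
    omega

/-- The summand of `G` indexed by `c` and `e`, as a function of `m = w + t`, without the factors
`q ^ (-t (ℓ + u - 1)) C_q(ℓ, t)`. The sign is that of the even or odd sum it belongs to.
The truncated difference `r` is meant for `c + e ≤ u` only. -/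
def parityTerm (u : ℕ) (p0 p1 p2 m : ℤ) (c e : ℕ) : F :=
  let r : ℕ := u - c - e
  if Even (m - r) then
    qq ^ (-(u : ℤ) * (c + e) + 2 * c + r * p0 + 2 * c * p1 + 2 * e * p2)
      * qbinom qq (m + p0) r
      * qbinom (qq ^ 2) ((m - r) / 2 + p1) c
      * qbinom (qq ^ 2) ((m - r) / 2 + p2) e
  else
    -(qq ^ (-((u : ℤ) - 1) * (c + e) + r * p0 + 2 * c * p1 + 2 * e * p2)
      * qbinom qq (m + p0) r
      * qbinom (qq ^ 2) (1 + (m - r - 1) / 2 + p1) c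
      * qbinom (qq ^ 2) ((m - r - 1) / 2 + p2) e)

/-- The sum over `c + e + r = u` in `G`, as a function of `m = w + t`. -/
def paritySum (u : ℕ) (p0 p1 p2 m : ℤ) : F :=
  ∑ c ∈ range (u + 1), ∑ e ∈ range (u + 1 - c), parityTerm u p0 p1 p2 m c e

theorem G_eq_qbinomSum (w : ℤ) (u ℓ : ℕ) (p0 p1 p2 : ℤ) :
    G w u ℓ p0 p1 p2 = (-1) ^ w * qq ^ ((u : ℤ) ^ 2 - w * u + ℓ * u) *
      qbinomSum qq u ℓ fun t => paritySum u p0 p1 p2 (w + t) := by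
  simp only [G, qbinomSum, paritySum, ← sum_sub_distrib]
  congr 1
  simp only [mul_sum]
  rw [sum_comm]
  refine sum_congr rfl fun c _ => ?_
  rw [sum_comm]
  refine sum_congr rfl fun t _ => sum_congr rfl fun e _ => ?_
  simp only [parityTerm, add_comm (t : ℤ) w]
  split_ifs <;> simp only [sub_eq_add_neg, zpow_add₀ qq_ne_zero, neg_mul] <;> ring

/-- Recursion in `ℓ`:
`G(w,u,ℓ+1;p0,p1,p2) = q^u G(w,u,ℓ;p0,p1,p2) − q^{u−2ℓ} G(w+1,u,ℓ;p0,p1,p2)`. -/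
theorem G_rec_ell (w p0 p1 p2 : ℤ) (u ℓ : ℕ) :
    G w u (ℓ + 1) p0 p1 p2
      = qq ^ (u : ℤ) * G w u ℓ p0 p1 p2
        - qq ^ ((u : ℤ) - 2 * (ℓ : ℤ)) * G (w + 1) u ℓ p0 p1 p2 := by
  have prefactor_succ : qq ^ ((u : ℤ) ^ 2 - w * u + (ℓ + 1 : ℕ) * u) =
      qq ^ (u : ℤ) * qq ^ ((u : ℤ) ^ 2 - w * u + ℓ * u) := by
    rw [← zpow_add₀ qq_ne_zero]
    push_cast
    ring_nf
  have prefactor_shift : qq ^ (u : ℤ) * qq ^ ((u : ℤ) ^ 2 - w * u + ℓ * u) *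
      qq ^ (-(u : ℤ) - 2 * ℓ) =
      qq ^ ((u : ℤ) - 2 * ℓ) * qq ^ ((u : ℤ) ^ 2 - (w + 1) * u + ℓ * u) := by
    simp only [← zpow_add₀ qq_ne_zero]
    ring_nf
  have sign_shift : (-1 : F) ^ (w + 1) = -(-1) ^ w := by
    rw [zpow_add_one₀ (by norm_num), mul_neg_one]
  have shift : (fun t : ℕ => paritySum u p0 p1 p2 (w + (t + 1 : ℕ))) =
      fun t : ℕ => paritySum u p0 p1 p2 (w + 1 + t) := by
    funext t
    rw [Nat.cast_succ, add_right_comm, add_assoc]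
  simp only [G_eq_qbinomSum]
  rw [qbinomSum_succ (qfact_qq_ne_zero _), shift, sign_shift, prefactor_succ]
  linear_combination (-1) ^ w *
    qbinomSum qq u ℓ (fun t => paritySum u p0 p1 p2 (w + 1 + t)) * prefactor_shift

end
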